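/- Let B → A be a ring homomorphism such that A is a finitely generated projective left B-module and a faithfully flat right B-module (via this homomorphism). If fin.dim B < ∞, then fin.dim B ≤ fin.dim A. -/

import Mathlib

open CategoryTheory Limits

universe u

/-- The projective dimension of an object `M` of an abelian category, as an element of
`ℕ∞ = ℕ ∪ {∞}`: the least `n` such that `M` admits a projective resolution vanishing in
degrees `> n` (and `⊤` if there is no such finite resolution). -/
noncomputable def projDim {C : Type*} [Category C] [Abelian C] (M : C) : ℕ∞ :=
  sInf {n : ℕ∞ | ∃ P : CategoryTheory.ProjectiveResolution M,
    ∀ i : ℕ, n < (i : ℕ∞) → Limits.IsZero (P.complex.X i)}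

/-- The finitistic dimension of a ring `R`:
`fin.dim R = sup { pd_R M : M a finitely generated left R-module with pd_R M < ∞ } ∈ ℕ ∪ {∞}`. -/
noncomputable def finDim (R : Type u) [Ring R] : ℕ∞ :=
  sSup {d : ℕ∞ | ∃ M : ModuleCat.{u} R, Module.Finite R M ∧ projDim M ≠ ⊤ ∧ projDim M = d}


open HomologicalComplex

section AbelianPart
variable {C : Type*} [Category C] [Abelian C]

lemma exact_res_zero {K : C} (Q : ProjectiveResolution K) :
    (ShortComplex.mk (Q.complex.d 1 0) (Q.π.f 0) Q.complex_d_comp_π_f_zero).Exact :=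
  ShortComplex.exact_of_g_is_cokernel _ Q.isColimitCokernelCofork

lemma hasPD_of_res {M : C} (P : ProjectiveResolution M) (n : ℕ)
    (h : ∀ i : ℕ, n ≤ i → IsZero (P.complex.X i)) : HasProjectiveDimensionLT M n := by
  let := HasExt.standard C
  rw [hasProjectiveDimensionLT_iff]
  intro i hi Y e
  obtain ⟨g, hg, rfl⟩ := P.extMk_surjective e (i+1) rfl
  obtain rfl : g = 0 := (h i hi).eq_of_src _ _
  simp

lemma exists_aug {K : C} (Q : ProjectiveResolution K) :
    ∃ (q : Q.complex.X 0 ⟶ K) (w : Q.complex.d 1 0 ≫ q = 0),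
      (ShortComplex.mk _ _ w).Exact ∧ Epi q :=
  ⟨Q.π.f 0, Q.complex_d_comp_π_f_zero, exact_res_zero Q,
    (inferInstance : Epi (Q.π.f 0))⟩

lemma splice_res {S : ShortComplex C} (hS : S.ShortExact) [Projective S.X₂]
    (Q : ProjectiveResolution S.X₁) : ∃ P : ProjectiveResolution S.X₃,
      ∀ i, P.complex.X (i+1) = Q.complex.X i := by
  have := hS.mono_f
  have := hS.epi_g
  obtain ⟨q, w0, hq, _⟩ := exists_aug Q
  have w : Q.complex.d 1 0 ≫ (q ≫ S.f) = 0 := by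
    rw [← Category.assoc, w0, zero_comp]
  have w2 : (q ≫ S.f) ≫ S.g = 0 := by
    simp
  have ex1 : (ShortComplex.mk _ _ w).Exact := by
    let α : ShortComplex.mk _ _ w0 ⟶ ShortComplex.mk _ _ w :=
      { τ₁ := 𝟙 _
        τ₂ := 𝟙 _
        τ₃ := S.f }
    have : Epi α.τ₁ := by dsimp [α]; infer_instance
    have : IsIso α.τ₂ := by dsimp [α]; infer_instance
    have : Mono α.τ₃ := by dsimp [α]; infer_instance
    exact (ShortComplex.exact_iff_of_epi_of_isIso_of_mono α).1 hq
  have ex0 : (ShortComplex.mk _ _ w2).Exact := by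
    let α : ShortComplex.mk _ _ w2 ⟶ S :=
      { τ₁ := q
        τ₂ := 𝟙 _
        τ₃ := 𝟙 _ }
    have : Epi α.τ₁ := by dsimp [α]; infer_instance
    have : IsIso α.τ₂ := by dsimp [α]; infer_instance
    have : Mono α.τ₃ := by dsimp [α]; infer_instance
    exact (ShortComplex.exact_iff_of_epi_of_isIso_of_mono α).2 hS.exact
  refine ⟨{ complex := ChainComplex.augment Q.complex (q ≫ S.f) w
            projective := ?_
            π := (ChainComplex.toSingle₀Equiv _ _).symm ⟨S.g, w2⟩
            quasiIso := ⟨?_⟩ }, fun i => rfl⟩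
  · rintro (_ | n)
    · assumption
    · exact Q.projective n
  · rintro (_ | n)
    · rw [ChainComplex.quasiIsoAt₀_iff, ShortComplex.quasiIso_iff_of_zeros' _ rfl rfl rfl]
      have e := ChainComplex.toSingle₀Equiv_symm_apply_f_zero
        (C := ChainComplex.augment Q.complex (q ≫ S.f) w) S.g w2
      refine (ShortComplex.exact_and_epi_g_iff_of_iso ?_).2 ⟨ex0, hS.epi_g⟩
      exact ShortComplex.isoMk (Iso.refl _) (Iso.refl _) (Iso.refl _)
          ((Category.id_comp _).trans (Category.comp_id _).symm)
          ((Category.id_comp _).trans (e.symm.trans (Category.comp_id _).symm))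
    · rw [quasiIsoAt_iff_exactAt' _ _ (ChainComplex.exactAt_succ_single_obj _ _)]
      rw [HomologicalComplex.exactAt_iff' _ (n + 2) (n + 1) n (by simp) (by simp)]
      rcases n with _ | n
      · exact ex1
      · exact Q.exact_succ n

lemma exists_res [EnoughProjectives C] (n : ℕ) : ∀ (M : C) [HasProjectiveDimensionLT M (n+1)],
    ∃ P : ProjectiveResolution M, ∀ i : ℕ, n + 1 ≤ i → IsZero (P.complex.X i) := by
  induction n with
  | zero =>
    intro M _
    have : Projective M := projective_iff_hasProjectiveDimensionLT_one.2 ‹_›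
    refine ⟨ProjectiveResolution.self M, fun i hi => ?_⟩
    rw [ProjectiveResolution.self_complex]
    exact HomologicalComplex.isZero_single_obj_X _ _ _ _ (by omega)
  | succ n ih =>
    intro M _
    let S := ShortComplex.mk (kernel.ι (Projective.π M)) (Projective.π M) (by simp)
    have hS : S.ShortExact :=
      { exact := ShortComplex.exact_kernel _
        mono_f := by dsimp [S]; infer_instance
        epi_g := by dsimp [S]; infer_instance }
    have hP : Projective S.X₂ := by dsimp [S]; infer_instance
    have := (hS.hasProjectiveDimensionLT_X₃_iff n hP).1 ‹_›
    obtain ⟨Q, hQ⟩ := ih S.X₁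
    obtain ⟨P, hP⟩ := splice_res hS Q
    refine ⟨P, fun i hi => ?_⟩
    obtain ⟨i, rfl⟩ : ∃ j, i = j + 1 := ⟨i - 1, by omega⟩
    rw [hP]
    exact hQ i (by omega)

lemma projDim_le_iff [EnoughProjectives C] (M : C) (n : ℕ) :
    projDim M ≤ n ↔ HasProjectiveDimensionLT M (n+1) := by
  constructor
  · intro h
    have hne : {n : ℕ∞ | ∃ P : CategoryTheory.ProjectiveResolution M,
      ∀ i : ℕ, n < (i : ℕ∞) → Limits.IsZero (P.complex.X i)}.Nonempty :=
      ⟨⊤, ProjectiveResolution.of M, by simp⟩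
    obtain ⟨P, hP⟩ := csInf_mem hne
    refine hasPD_of_res P _ fun i hi => hP i (lt_of_le_of_lt h ?_)
    exact_mod_cast hi
  · intro h
    obtain ⟨P, hP⟩ := exists_res n M
    exact sInf_le ⟨P, fun i hi => hP i (by exact_mod_cast hi)⟩

lemma projDim_map_le {D : Type*} [Category D] [Abelian D] (F : C ⥤ D) [F.Additive]
    [F.PreservesProjectiveObjects] [F.PreservesHomology] (M : C) :
    projDim (F.obj M) ≤ projDim M := by
  refine le_sInf ?_
  rintro n ⟨P, hP⟩
  exact sInf_le ⟨F.mapProjectiveResolution P, fun i hi => F.map_isZero (hP i hi)⟩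
end AbelianPart

section ModulePart
variable {B A : Type u} [Ring B] [Ring A] (f : B →+* A)

lemma res_projective
    (hAproj : Module.Projective B ((ModuleCat.restrictScalars f).obj (ModuleCat.of A A))) :
    (ModuleCat.restrictScalars.{u} f).PreservesProjectiveObjects where
  projective_obj {P} hP := by
    have hP' : Module.Projective A P := ModuleCat.projective_of_module_projective P
    obtain ⟨s, hs⟩ := (Module.projective_def' (R := A) (P := P)).1 hP'
    let _ : Module B A := Module.compHom A f
    let _ : Module B P := Module.compHom P f
    have : Module.Projective B A := hAproj
    have : IsScalarTower B A P := ⟨fun b a p => mul_smul (f b) a p⟩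
    have : IsScalarTower B A A := ⟨fun b a p => mul_smul (f b) a p⟩
    have : IsScalarTower B A (P →₀ A) := inferInstance
    classical
    have h1 : Module.Projective B (P →₀ A) :=
      Module.Projective.of_equiv' (M := Π₀ _ : P, A) (finsuppLequivDFinsupp B).symm
    have h2 : Module.Projective B P :=
      Module.Projective.of_split (s.restrictScalars B)
        ((Finsupp.linearCombination A id).restrictScalars B)
        (by ext x; exact LinearMap.congr_fun hs x)
    have h3 : Module.Projective B ((ModuleCat.restrictScalars f).obj P) := h2
    exact ModuleCat.projective_of_categoryTheory_projective _

lemma res_finite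
    (hAfin : Module.Finite B ((ModuleCat.restrictScalars f).obj (ModuleCat.of A A)))
    (N : ModuleCat.{u} A) [Module.Finite A N] :
    Module.Finite B ((ModuleCat.restrictScalars f).obj N) := by
  let _ : Module B A := Module.compHom A f
  let _ : Module B N := Module.compHom N f
  have : Module.Finite B A := hAfin
  have : IsScalarTower B A N := ⟨fun b a p => mul_smul (f b) a p⟩
  have h : Module.Finite B N := Module.Finite.trans A N
  exact h

variable {f} {E : ModuleCat.{u} B ⥤ ModuleCat.{u} A}

lemma ext_finite (adj : E ⊣ ModuleCat.restrictScalars f) (M : ModuleCat.{u} B) [hM : Module.Finite B M] : Module.Finite A (E.obj M) := by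
  obtain ⟨t, ht⟩ := hM
  classical
  let η : M →ₗ[B] (ModuleCat.restrictScalars f).obj (E.obj M) := (adj.unit.app M).hom
  let g : M → E.obj M := fun m => η m
  let S : Submodule A (E.obj M) := Submodule.span A (t.image g)
  have hS : ∀ m : M, g m ∈ S := by
    intro m
    have hm : m ∈ Submodule.span B (t : Set M) := by rw [ht]; trivial
    induction hm using Submodule.span_induction with
    | mem x hx => exact Submodule.subset_span (by
        simp only [Finset.coe_image]; exact ⟨x, hx, rfl⟩)
    | zero =>
      have : g 0 = 0 := map_zero η
      rw [this]; exact S.zero_mem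
    | add x y _ _ hx hy =>
      have : g (x + y) = g x + g y := map_add η x y
      rw [this]; exact S.add_mem hx hy
    | smul b x _ hx =>
      have : g (b • x) = f b • g x := map_smul η b x
      rw [this]; exact S.smul_mem _ hx
  let q : E.obj M ⟶ ModuleCat.of A (E.obj M ⧸ S) := ModuleCat.ofHom S.mkQ
  have hq : q = 0 := by
    apply (adj.homEquiv _ _).injective
    rw [Adjunction.homEquiv_unit, Adjunction.homEquiv_unit, Functor.map_zero, comp_zero]
    ext m
    exact (Submodule.Quotient.mk_eq_zero S).2 (hS m)
  have htop : S = ⊤ := by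
    rw [← S.ker_mkQ, LinearMap.ker_eq_top]
    exact congrArg ModuleCat.Hom.hom hq
  exact ⟨⟨_, htop⟩⟩

lemma unit_mono (adj : E ⊣ ModuleCat.restrictScalars f) (hflat : E.PreservesMonomorphisms)
    (hfaithful : ∀ X : ModuleCat.{u} B, Limits.IsZero (E.obj X) → Limits.IsZero X)
    (M : ModuleCat.{u} B) : Mono (adj.unit.app M) := by
  have := adj.left_adjoint_additive
  apply Preadditive.mono_of_isZero_kernel
  apply hfaithful
  have h1 : Mono (E.map (adj.unit.app M)) :=
    mono_of_mono_fac (adj.left_triangle_components M)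
  have h2 : Mono (E.map (kernel.ι (adj.unit.app M)) ≫ E.map (adj.unit.app M)) := inferInstance
  rw [← E.map_comp, kernel.condition, E.map_zero] at h2
  exact @IsZero.of_mono_zero _ _ _ _ _ h2

end ModulePart

/-- Let `f : B →+* A` be a ring homomorphism such that `A` is a finitely generated projective
left `B`-module and a faithfully flat right `B`-module (via `f`).  If `fin.dim B < ∞`, then
`fin.dim B ≤ fin.dim A`.  (Theorem 2.3 of the paper, stated with the module-theoretic
properties that a right faithfully flat weak `H`-Galois extension `A/B` provides.)

The extension-of-scalars functor `A ⊗_B -` is encoded as a functor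
`E : ModuleCat B ⥤ ModuleCat A` that is left adjoint to restriction of scalars along `f`
(any such left adjoint is naturally isomorphic to `A ⊗_B -`).  Being a left adjoint, `E` is
automatically right exact, so faithful flatness of `A` as a right `B`-module is exactly the
statement that `E` preserves monomorphisms (flatness) and sends no nonzero module to zero. -/
theorem finDim_le_of_faithfullyFlat_extension (B A : Type u) [Ring B] [Ring A] (f : B →+* A)
    (hAfin : Module.Finite B ((ModuleCat.restrictScalars f).obj (ModuleCat.of A A)))
    (hAproj : Module.Projective B ((ModuleCat.restrictScalars f).obj (ModuleCat.of A A)))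
    (E : ModuleCat.{u} B ⥤ ModuleCat.{u} A) (adj : E ⊣ ModuleCat.restrictScalars f)
    (hflat : E.PreservesMonomorphisms)
    (hfaithful : ∀ X : ModuleCat.{u} B, Limits.IsZero (E.obj X) → Limits.IsZero X)
    (hfin : finDim B < ⊤) :
    finDim B ≤ finDim A := by
  have hEadd : E.Additive := adj.left_adjoint_additive
  have : PreservesColimitsOfSize.{0, 0} E := adj.leftAdjoint_preservesColimits
  have hEhom : E.PreservesHomology := E.preservesHomology_of_preservesMonos_and_cokernels
  have hRepi : (ModuleCat.restrictScalars.{u} f).PreservesEpimorphisms :=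
    ⟨fun _ h => by rwa [ModuleCat.epi_iff_surjective] at h ⊢⟩
  have hEproj : E.PreservesProjectiveObjects :=
    Functor.preservesProjectiveObjects_of_adjunction_of_preservesEpimorphisms adj
  have hRproj := res_projective f hAproj
  have : PreservesLimitsOfSize.{0, 0} (ModuleCat.restrictScalars.{u} f) :=
    adj.rightAdjoint_preservesLimits
  have hRhom : (ModuleCat.restrictScalars.{u} f).PreservesHomology :=
    (ModuleCat.restrictScalars.{u} f).preservesHomology_of_preservesEpis_and_kernels
  obtain ⟨n, hn⟩ := ENat.ne_top_iff_exists.1 hfin.ne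
  -- every finitely generated `B`-module of finite projective dimension has dimension `≤ n`
  have hB : ∀ (M : ModuleCat.{u} B) (k : ℕ), Module.Finite B M →
      HasProjectiveDimensionLT M (k + 1) → HasProjectiveDimensionLT M (n + 1) := by
    intro M k hM hk
    rw [← projDim_le_iff] at hk ⊢
    rw [hn]
    exact le_sSup ⟨M, hM, ne_top_of_le_ne_top (ENat.natCast_ne_top k) hk, rfl⟩
  rcases n with _ | n
  · rw [← hn]; exact zero_le
  by_contra hlt
  rw [not_le, ← hn] at hlt
  have hA : finDim A ≤ n := by
    rw [Nat.cast_add, Nat.cast_one] at hlt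
    exact Order.le_of_lt_add_one hlt
  have hBn : finDim B ≤ n := by
    refine sSup_le ?_
    rintro _ ⟨M, hM, htop, rfl⟩
    obtain ⟨k, hk⟩ := ENat.ne_top_iff_exists.1 htop
    have hMn : HasProjectiveDimensionLT M (n + 1 + 1) :=
      hB M k hM ((projDim_le_iff M k).1 hk.symm.le)
    have hEfin := ext_finite adj M
    have hE0 : projDim (E.obj M) ≤ finDim A :=
      le_sSup ⟨E.obj M, hEfin, ne_top_of_le_ne_top htop (projDim_map_le E M), rfl⟩
    have hE : projDim (E.obj M) ≤ n := hE0.trans hA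
    have hRE := (projDim_map_le (ModuleCat.restrictScalars.{u} f) (E.obj M)).trans hE
    rw [projDim_le_iff] at hRE
    have hmono := unit_mono adj hflat hfaithful M
    let S := ShortComplex.mk (adj.unit.app M) (cokernel.π (adj.unit.app M)) (by simp)
    have hS : S.ShortExact :=
      { exact := ShortComplex.exact_cokernel _
        mono_f := hmono
        epi_g := by dsimp [S]; infer_instance }
    have hRfin := res_finite f hAfin (E.obj M)
    have hCfin : Module.Finite B S.X₃ :=
      Module.Finite.of_surjective (M := (ModuleCat.restrictScalars f).obj (E.obj M))
        S.g.hom ((ModuleCat.epi_iff_surjective _).1 hS.epi_g)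
    have hX2 : HasProjectiveDimensionLT S.X₂ (n + 1) := hRE
    have hC : HasProjectiveDimensionLT S.X₃ (n + 1 + 1) :=
      hB _ (n + 2) hCfin (hS.hasProjectiveDimensionLT_X₃ (n + 2) hMn
        (hasProjectiveDimensionLT_of_ge _ (n + 1) _ (by omega)))
    rw [projDim_le_iff]
    exact hS.hasProjectiveDimensionLT_X₁ (n + 1) hX2 hC
  rw [← hn] at hBn
  norm_cast at hBn
  omega
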